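/- Fix 0 < α ≤ 1 and set p := 1/α. Let m ≥ 1 and define the mailing cost C : ℤ^m → [0,∞) by C(z_1, …, z_m) := (Σ_{i: z_i ≥ 0} z_i)^α + (Σ_{i: z_i < 0} |z_i|)^α. Fix positive integers N_1, …, N_m with N := N_1 + … + N_m, and define ∥x∥ := ∥x_+∥_{ℓ^p} + ∥x_-∥_{ℓ^p} on ℝ^N, where x_+ (resp. x_-) is obtained from x by setting all negative (resp. positive) coordinates equal to zero. Then ∥·∥ is a monotone norm on ℝ^N and it satisfies the compatibility equation for C. -/

import Mathlib

/-!
Writing `x⁺` and `x⁻` for the positive and negative parts in a vector lattice, `x ↦ f x⁺ + f x⁻` is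
a norm as soon as `f` is a norm that is monotone on the positive cone: the positive part is
subadditive and positively homogeneous, and `x ↦ -x` exchanges the two parts. On `ℝ^N`, `x ⪯ y`
means that `x⁺ ≤ y⁺` and `x⁻ ≤ y⁻`, so monotonicity passes from `f` to this norm. For compatibility,
the positive part of a signed indicator is the indicator of the blocks with `θ i > 0`. It has
`∑ (θ i)⁺` nonzero coordinates, all equal to `1`, so its `ℓ^p` norm is `(∑ (θ i)⁺) ^ (1 / p)`.
-/

/-- `f` is a norm on the real vector space `E`. -/
def IsNorm {E : Type*} [AddCommGroup E] [Module ℝ E] (f : E → ℝ) : Prop :=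
  (∀ x, 0 ≤ f x) ∧ (∀ x, f x = 0 ↔ x = 0) ∧
    (∀ x y, f (x + y) ≤ f x + f y) ∧ ∀ (c : ℝ) (x : E), f (c • x) = |c| * f x

/-- The partial order `x ⪯ y` on real vectors. -/
def PreOrd {ι : Type*} (x y : ι → ℝ) : Prop :=
  ∀ j, |x j| ≤ |y j| ∧ 0 ≤ x j * y j

/-- The multi-material compatibility equation between a cost `C : ℤ^m → ℝ` and a
norm on `ℝ^N`, where `{1, …, N}` is partitioned into blocks of sizes `N_1, …, N_m`
(realized as the sigma type `Σ i, Fin (N i)`). -/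
def CompatEq (m : ℕ) (N : Fin m → ℕ) (C : (Fin m → ℤ) → ℝ)
    (nrm : ((Σ i : Fin m, Fin (N i)) → ℝ) → ℝ) : Prop :=
  ∀ θ : Fin m → ℤ, (∀ i, (θ i).natAbs ≤ N i) →
    ∀ K : (i : Fin m) → Finset (Fin (N i)), (∀ i, (K i).card = (θ i).natAbs) →
      C θ = nrm fun j => ((θ j.1).sign : ℝ) * (if j.2 ∈ K j.1 then 1 else 0)

open scoped ENNReal

section VectorLattice

variable {E : Type*} [Lattice E] [AddCommGroup E]

/-- The functional `x ↦ f x_+ + f x_-` of a norm `f`; the mailing problem takes the `ℓ^p` norm for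
`f`. Mathlib's `x⁻` is `-x_-`, to which a norm assigns the same value. -/
def splitNorm (f : E → ℝ) (x : E) : ℝ := f x⁺ + f x⁻

theorem splitNorm_neg (f : E → ℝ) (x : E) : splitNorm f (-x) = splitNorm f x := by
  simp only [splitNorm, posPart_neg, negPart_neg, add_comm]

theorem splitNorm_le_splitNorm {f : E → ℝ} (hf : MonotoneOn f (Set.Ici 0)) {x y : E}
    (hpos : x⁺ ≤ y⁺) (hneg : x⁻ ≤ y⁻) : splitNorm f x ≤ splitNorm f y :=
  add_le_add (hf (posPart_nonneg x) (posPart_nonneg y) hpos)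
    (hf (negPart_nonneg x) (negPart_nonneg y) hneg)

section AddLeftMono

variable [AddLeftMono E]

theorem posPart_add_le_add_posPart (x y : E) : (x + y)⁺ ≤ x⁺ + y⁺ :=
  sup_le (add_le_add (le_posPart x) (le_posPart y))
    (add_nonneg (posPart_nonneg x) (posPart_nonneg y))

theorem negPart_add_le_add_negPart (x y : E) : (x + y)⁻ ≤ x⁻ + y⁻ := by
  simpa only [← posPart_neg, neg_add] using posPart_add_le_add_posPart (-x) (-y)

end AddLeftMono

section Module

variable [Module ℝ E]

theorem posPart_smul_of_nonneg [PosSMulMono ℝ E] {c : ℝ} (hc : 0 ≤ c) (x : E) :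
    (c • x)⁺ = c • x⁺ := by
  rcases hc.eq_or_lt with rfl | hc
  · simp only [zero_smul, posPart_zero]
  · calc c • x ⊔ 0 = c • x ⊔ c • 0 := by rw [smul_zero]
      _ = c • (x ⊔ 0) := ((OrderIso.smulRight hc).map_sup x 0).symm

theorem negPart_smul_of_nonneg [PosSMulMono ℝ E] {c : ℝ} (hc : 0 ≤ c) (x : E) :
    (c • x)⁻ = c • x⁻ := by
  simpa only [← posPart_neg, smul_neg] using posPart_smul_of_nonneg hc (-x)

theorem splitNorm_eq_zero_iff [AddLeftMono E] {f : E → ℝ} (hf : IsNorm f) {x : E} :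
    splitNorm f x = 0 ↔ x = 0 := by
  obtain ⟨hnonneg, hzero, -, -⟩ := hf
  rw [splitNorm, add_eq_zero_iff_of_nonneg (hnonneg _) (hnonneg _), hzero, hzero]
  refine ⟨fun ⟨hpos, hneg⟩ => ?_, ?_⟩
  · rw [← posPart_sub_negPart x, hpos, hneg, sub_zero]
  · rintro rfl
    exact ⟨posPart_zero, negPart_zero⟩

theorem splitNorm_add_le [AddLeftMono E] {f : E → ℝ} (hf : IsNorm f)
    (hmono : MonotoneOn f (Set.Ici 0)) (x y : E) :
    splitNorm f (x + y) ≤ splitNorm f x + splitNorm f y := by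
  obtain ⟨-, -, hadd, -⟩ := hf
  have hpos : f (x + y)⁺ ≤ f x⁺ + f y⁺ :=
    (hmono (posPart_nonneg _) (add_nonneg (posPart_nonneg x) (posPart_nonneg y))
      (posPart_add_le_add_posPart x y)).trans (hadd _ _)
  have hneg : f (x + y)⁻ ≤ f x⁻ + f y⁻ :=
    (hmono (negPart_nonneg _) (add_nonneg (negPart_nonneg x) (negPart_nonneg y))
      (negPart_add_le_add_negPart x y)).trans (hadd _ _)
  calc f (x + y)⁺ + f (x + y)⁻ ≤ f x⁺ + f y⁺ + (f x⁻ + f y⁻) := add_le_add hpos hneg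
    _ = f x⁺ + f x⁻ + (f y⁺ + f y⁻) := add_add_add_comm _ _ _ _

theorem splitNorm_smul [PosSMulMono ℝ E] {f : E → ℝ} (hf : IsNorm f) (c : ℝ) (x : E) :
    splitNorm f (c • x) = |c| * splitNorm f x := by
  have splitNorm_abs_smul : splitNorm f (|c| • x) = |c| * splitNorm f x := by
    obtain ⟨-, -, -, hsmul⟩ := hf
    simp only [splitNorm, posPart_smul_of_nonneg (abs_nonneg c),
      negPart_smul_of_nonneg (abs_nonneg c), hsmul, abs_abs, mul_add]
  rcases abs_choice c with hc | hc
  · rwa [hc] at splitNorm_abs_smul ⊢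
  · rwa [hc, neg_smul, splitNorm_neg, ← hc] at splitNorm_abs_smul

theorem IsNorm.splitNorm [AddLeftMono E] [PosSMulMono ℝ E] {f : E → ℝ} (hf : IsNorm f)
    (hmono : MonotoneOn f (Set.Ici 0)) : IsNorm (splitNorm f) :=
  ⟨fun x => add_nonneg (hf.1 x⁺) (hf.1 x⁻), fun _ => splitNorm_eq_zero_iff hf,
    splitNorm_add_le hf hmono, splitNorm_smul hf⟩

end Module

end VectorLattice

namespace PreOrd

variable {ι : Type*} {x y : ι → ℝ}

theorem neg (h : PreOrd x y) : PreOrd (-x) (-y) := fun j => by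
  simpa only [Pi.neg_apply, abs_neg, neg_mul_neg] using h j

theorem posPart_le_posPart (h : PreOrd x y) : x⁺ ≤ y⁺ := fun j => by
  obtain ⟨habs, hmul⟩ := h j
  rcases le_or_gt (x j) 0 with hx | hx
  · exact (posPart_of_nonpos hx).trans_le (posPart_nonneg (y j))
  · have hy : 0 ≤ y j := nonneg_of_mul_nonneg_right hmul hx
    exact posPart_mono (by rwa [abs_of_pos hx, abs_of_nonneg hy] at habs)

theorem negPart_le_negPart (h : PreOrd x y) : x⁻ ≤ y⁻ := by
  simpa only [posPart_neg] using h.neg.posPart_le_posPart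

end PreOrd

section PiLpNorm

variable {ι : Type*} [Fintype ι] {p : ℝ≥0∞}

/-- The `ℓ^p` norm as a function on plain vectors `ι → ℝ`, whose own `‖·‖` is the sup norm. -/
noncomputable def piLpNorm (p : ℝ≥0∞) (x : ι → ℝ) : ℝ := ‖WithLp.toLp p x‖

theorem piLpNorm_eq_sum (hp : 0 < p.toReal) (x : ι → ℝ) :
    piLpNorm p x = (∑ j, |x j| ^ p.toReal) ^ (1 / p.toReal) :=
  PiLp.norm_eq_sum hp _

theorem splitNorm_piLpNorm_eq_sum (hp : 0 < p.toReal) (x : ι → ℝ) :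
    splitNorm (piLpNorm p) x = (∑ j, |max (x j) 0| ^ p.toReal) ^ (1 / p.toReal) +
      (∑ j, |min (x j) 0| ^ p.toReal) ^ (1 / p.toReal) := by
  have abs_negPart (j : ι) : |x⁻ j| = |min (x j) 0| := by
    rw [Pi.negPart_apply, negPart_eq_neg_inf_zero, abs_neg]
  simp only [splitNorm, piLpNorm_eq_sum hp, abs_negPart]
  rfl

theorem isNorm_piLpNorm [Fact (1 ≤ p)] : IsNorm (piLpNorm p : (ι → ℝ) → ℝ) := by
  refine ⟨fun x => norm_nonneg _, fun x => ?_, fun x y => norm_add_le (WithLp.toLp p x) _,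
    fun c x => norm_smul c (WithLp.toLp p x)⟩
  rw [piLpNorm, norm_eq_zero, WithLp.toLp_eq_zero]

theorem piLpNorm_le_piLpNorm [Fact (1 ≤ p)] {x y : ι → ℝ} (h : |x| ≤ |y|) :
    piLpNorm p x ≤ piLpNorm p y := by
  rcases eq_or_ne p ∞ with rfl | hp
  · simp only [piLpNorm, PiLp.norm_eq_ciSup]
    exact ciSup_mono (Set.finite_range _).bddAbove h
  · have hp0 : 0 < p.toReal := ENNReal.toReal_pos (zero_lt_one.trans_le Fact.out).ne' hp
    rw [piLpNorm_eq_sum hp0, piLpNorm_eq_sum hp0]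
    gcongr (∑ j, ?_ ^ _) ^ _ with j
    exact h j

theorem monotoneOn_piLpNorm [Fact (1 ≤ p)] :
    MonotoneOn (piLpNorm p : (ι → ℝ) → ℝ) (Set.Ici 0) := fun _ hx _ _ hxy =>
  piLpNorm_le_piLpNorm (abs_le_abs_of_nonneg hx hxy)

end PiLpNorm

section SignedBlockIndicator

variable {ι : Type*} {κ : ι → Type*} [∀ i, DecidableEq (κ i)]

/-- The vector `∑ i, sign (θ i) ∑ k ∈ K i, e_k` that `CompatEq` evaluates the norm on. -/
def signedBlockIndicator (θ : ι → ℤ) (K : ∀ i, Finset (κ i)) (j : Σ i, κ i) : ℝ :=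
  ((θ j.1).sign : ℝ) * (if j.2 ∈ K j.1 then 1 else 0)

theorem signedBlockIndicator_neg (θ : ι → ℤ) (K : ∀ i, Finset (κ i)) :
    signedBlockIndicator (-θ) K = -signedBlockIndicator θ K := by
  ext j
  simp only [signedBlockIndicator, Pi.neg_apply, Int.sign_neg, Int.cast_neg, neg_mul]

theorem posPart_signedBlockIndicator (θ : ι → ℤ) (K : ∀ i, Finset (κ i)) :
    (signedBlockIndicator θ K)⁺ = signedBlockIndicator θ⁺ K := by
  have posPart_sign (a : ℤ) : ((a.sign : ℝ))⁺ = (a⁺.sign : ℝ) := by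
    rcases lt_trichotomy a 0 with ha | rfl | ha
    · simp [Int.sign_eq_neg_one_of_neg ha, posPart_of_nonpos ha.le]
    · simp
    · simp [Int.sign_eq_one_of_pos ha, posPart_of_nonneg ha.le]
  ext j
  by_cases hj : j.2 ∈ K j.1
  · simp [signedBlockIndicator, hj, posPart_sign]
  · simp [signedBlockIndicator, hj]

variable [Fintype ι] [∀ i, Fintype (κ i)] {p : ℝ≥0∞}

theorem piLpNorm_signedBlockIndicator (hp : 0 < p.toReal) (θ : ι → ℤ) (K : ∀ i, Finset (κ i)) :
    piLpNorm p (signedBlockIndicator θ K) =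
      ((∑ i, (K i).card * |(θ i).sign| : ℤ) : ℝ) ^ (1 / p.toReal) := by
  have abs_sign_rpow (a : ℤ) : |(a.sign : ℝ)| ^ p.toReal = |(a.sign : ℝ)| := by
    rcases Int.sign_trichotomy a with ha | ha | ha <;> simp [ha, hp.ne']
  have abs_rpow (j : Σ i, κ i) : |signedBlockIndicator θ K j| ^ p.toReal =
      if j.2 ∈ K j.1 then |((θ j.1).sign : ℝ)| else 0 := by
    by_cases hj : j.2 ∈ K j.1 <;> simp [signedBlockIndicator, hj, abs_sign_rpow, hp.ne']
  rw [piLpNorm_eq_sum hp, Fintype.sum_congr _ _ abs_rpow, Fintype.sum_sigma]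
  simp

theorem piLpNorm_posPart_signedBlockIndicator (hp : 0 < p.toReal) {θ : ι → ℤ}
    {K : ∀ i, Finset (κ i)} (hK : ∀ i, (K i).card = (θ i).natAbs) :
    piLpNorm p (signedBlockIndicator θ K)⁺ = ((∑ i, (θ i)⁺ : ℤ) : ℝ) ^ (1 / p.toReal) := by
  have card_mul_abs_sign (i : ι) : ((K i).card : ℤ) * |(θ⁺ i).sign| = (θ i)⁺ := by
    rw [hK i, Int.natCast_natAbs, Pi.posPart_apply]
    rcases le_or_gt (θ i) 0 with hi | hi
    · simp [posPart_of_nonpos hi]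
    · simp [posPart_of_nonneg hi.le, Int.sign_eq_one_of_pos hi, abs_of_pos hi]
  rw [posPart_signedBlockIndicator, piLpNorm_signedBlockIndicator hp,
    Fintype.sum_congr _ _ card_mul_abs_sign]

theorem splitNorm_signedBlockIndicator (hp : 0 < p.toReal) {θ : ι → ℤ}
    {K : ∀ i, Finset (κ i)} (hK : ∀ i, (K i).card = (θ i).natAbs) :
    splitNorm (piLpNorm p) (signedBlockIndicator θ K) =
      ((∑ i, (θ i)⁺ : ℤ) : ℝ) ^ (1 / p.toReal) + ((∑ i, (θ i)⁻ : ℤ) : ℝ) ^ (1 / p.toReal) := by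
  have hK_neg : ∀ i, (K i).card = ((-θ) i).natAbs := by
    simpa only [Pi.neg_apply, Int.natAbs_neg] using hK
  rw [splitNorm, ← posPart_neg (signedBlockIndicator θ K), ← signedBlockIndicator_neg,
    piLpNorm_posPart_signedBlockIndicator hp hK, piLpNorm_posPart_signedBlockIndicator hp hK_neg]
  simp only [Pi.neg_apply, posPart_neg]

end SignedBlockIndicator

section FilterSums

variable {ι G : Type*} [AddCommGroup G] [LinearOrder G]

theorem sum_filter_nonneg_eq_sum_posPart (s : Finset ι) (z : ι → G) :
    ∑ i ∈ s with 0 ≤ z i, z i = ∑ i ∈ s, (z i)⁺ := by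
  simp only [Finset.sum_filter, posPart_eq_ite]

theorem sum_filter_neg_abs_eq_sum_negPart [AddLeftMono G] (s : Finset ι) (z : ι → G) :
    ∑ i ∈ s with z i < 0, |z i| = ∑ i ∈ s, (z i)⁻ := by
  refine (Finset.sum_filter _ _).trans (Finset.sum_congr rfl fun i _ => ?_)
  split_ifs with hi
  · rw [abs_of_neg hi, negPart_of_nonpos hi.le]
  · rw [negPart_of_nonneg (not_lt.mp hi)]

end FilterSums

/-- The mailing problem: fix `0 < α ≤ 1` and `p := 1/α`. The cost
`C(z) := (∑_{i : z_i ≥ 0} z_i)^α + (∑_{i : z_i < 0} |z_i|)^α` on `ℤ^m` and the norm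
`∥x∥ := ∥x_+∥_{ℓ^p} + ∥x_-∥_{ℓ^p}` on `ℝ^N` (where `x_+`, resp. `x_-`, is obtained
from `x` by setting all negative, resp. positive, coordinates to zero) satisfy: `∥·∥`
is a monotone norm satisfying the compatibility equation for `C`. -/
theorem mailing_cost_compatible_norm
    (α : ℝ) (hα0 : 0 < α) (hα1 : α ≤ 1)
    (p : ℝ) (hp : p = 1 / α)
    {m : ℕ} (hm : 1 ≤ m)
    (N : Fin m → ℕ) (hN : ∀ i, 0 < N i)
    (C : (Fin m → ℤ) → ℝ)
    (hC : C = fun z =>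
      ((∑ i ∈ Finset.univ.filter (fun i => 0 ≤ z i), z i : ℤ) : ℝ) ^ α +
      ((∑ i ∈ Finset.univ.filter (fun i => z i < 0), |z i| : ℤ) : ℝ) ^ α)
    (nrm : ((Σ i : Fin m, Fin (N i)) → ℝ) → ℝ)
    (hnrm : nrm = fun x =>
      (∑ j, |max (x j) 0| ^ p) ^ (1 / p) + (∑ j, |min (x j) 0| ^ p) ^ (1 / p)) :
    IsNorm nrm ∧ (∀ x y, PreOrd x y → nrm x ≤ nrm y) ∧ CompatEq m N C nrm := by
  have hp1 : 1 ≤ p := hp ▸ one_le_one_div hα0 hα1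
  have hp_toReal : (ENNReal.ofReal p).toReal = p := ENNReal.toReal_ofReal (zero_le_one.trans hp1)
  have hp_pos : 0 < (ENNReal.ofReal p).toReal := by
    simpa only [hp_toReal] using zero_lt_one.trans_le hp1
  have : Fact (1 ≤ ENNReal.ofReal p) := ⟨ENNReal.one_le_ofReal.mpr hp1⟩
  have hnrm_split : nrm = splitNorm (piLpNorm (ENNReal.ofReal p)) := by
    ext x
    simp only [hnrm, splitNorm_piLpNorm_eq_sum hp_pos, hp_toReal]
  rw [hnrm_split]
  refine ⟨isNorm_piLpNorm.splitNorm monotoneOn_piLpNorm, fun x y hxy => ?_, fun θ _ K hK => ?_⟩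
  · exact splitNorm_le_splitNorm monotoneOn_piLpNorm hxy.posPart_le_posPart hxy.negPart_le_negPart
  · have hα : 1 / (ENNReal.ofReal p).toReal = α := by rw [hp_toReal, hp, one_div_one_div]
    simp only [hC, sum_filter_nonneg_eq_sum_posPart, sum_filter_neg_abs_eq_sum_negPart]
    rw [← hα]
    exact (splitNorm_signedBlockIndicator hp_pos hK).symm
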